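/- Let R = {R_1,…,R_N} be an area-regular partition of S^d. Then the average of ‖(1/N)·Σ_{i=1}^N G_{x_i}‖_w² over points x_i distributed independently and uniformly in the regions R_i equals Σ_{i=1}^N ∫_{R_i×R_i} (g_w(1) − g_w((x,y))) dμ_d(x) dμ_d(y); that is, (1/(μ_d(R_1)⋯μ_d(R_N)))·∫_{R_1×⋯×R_N} ‖(1/N)·Σ_{i=1}^N G_{x_i}‖_w² dμ_d(x_1)⋯dμ_d(x_N) = Σ_{i=1}^N ∫_{R_i×R_i} (g_w(1) − g_w((x,y))) dμ_d(x) dμ_d(y). -/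

import Mathlib

open MeasureTheory Finset
open scoped RealInnerProductSpace

noncomputable section
attribute [local instance] Classical.propDecidable

/-- Euclidean space `ℝ^{d+1}`. -/
abbrev Euc (d : ℕ) := EuclideanSpace ℝ (Fin (d + 1))

/-- The unit sphere `S^d ⊆ ℝ^{d+1}`. -/
abbrev Sph (d : ℕ) := Metric.sphere (0 : Euc d) 1

/-- Real-valued functions on the sphere. -/
abbrev SphFun (d : ℕ) := Sph d → ℝ

/-- The normalized surface measure `μ_d` on `S^d`. -/
noncomputable def muSph (d : ℕ) : Measure (Sph d) :=
  ((volume : Measure (Euc d)).toSphere Set.univ)⁻¹ • (volume : Measure (Euc d)).toSphere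

/-- Gegenbauer polynomials `C_k^α`, normalized so that `C_k^α(1) = binom(2α+k-1, k)`,
defined by the standard three-term recurrence. -/
noncomputable def gegenbauer (α : ℝ) : ℕ → Polynomial ℝ
  | 0 => 1
  | 1 => Polynomial.C (2 * α) * Polynomial.X
  | n + 2 =>
      Polynomial.C (2 * ((n : ℝ) + 1 + α) / ((n : ℝ) + 2)) *
          (Polynomial.X * gegenbauer α (n + 1)) -
        Polynomial.C (((n : ℝ) + 2 * α) / ((n : ℝ) + 2)) * gegenbauer α n

/-- `dim H_k = ((2k+d-1)/(k+d-1))·binom(d+k-1, k)`. -/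
noncomputable def dimHarm (d k : ℕ) : ℝ :=
  ((2 * (k : ℝ) + d - 1) / ((k : ℝ) + d - 1)) * (Nat.choose (d + k - 1) k : ℝ)

/-- The kernel polynomial `g_w(t) = Σ_{k=1}^n dim H_k / (w_k G_k^α(1)) · G_k^α(t)`,
with `α = (d-1)/2` and `w_k = k(k+d-1)`. -/
noncomputable def gw (d n : ℕ) : Polynomial ℝ :=
  ∑ k ∈ Finset.Icc 1 n,
    Polynomial.C (dimHarm d k /
        (((k : ℝ) * ((k : ℝ) + d - 1)) * (gegenbauer (((d : ℝ) - 1) / 2) k).eval 1)) *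
      gegenbauer (((d : ℝ) - 1) / 2) k

/-- The Laplace operator on polynomials in `d+1` variables. -/
noncomputable def polyLaplacian (d : ℕ) (p : MvPolynomial (Fin (d + 1)) ℝ) :
    MvPolynomial (Fin (d + 1)) ℝ :=
  ∑ i : Fin (d + 1), MvPolynomial.pderiv i (MvPolynomial.pderiv i p)

/-- The space `H_k` of spherical harmonics of degree `k` on `S^d`: restrictions to the
sphere of harmonic homogeneous polynomials of degree `k`. -/
def sphHarmonic (d k : ℕ) : Set (SphFun d) :=
  {f | ∃ p : MvPolynomial (Fin (d + 1)) ℝ, p.IsHomogeneous k ∧ polyLaplacian d p = 0 ∧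
        ∀ x : Sph d, f x = MvPolynomial.eval (fun i => (x : Euc d) i) p}

/-- The space `P_n`: restrictions to `S^d` of polynomials of total degree at most `n`
having zero mean over the sphere. -/
def PolySph (d n : ℕ) : Set (SphFun d) :=
  {f | ∃ p : MvPolynomial (Fin (d + 1)) ℝ, p.totalDegree ≤ n ∧
        (∀ x : Sph d, f x = MvPolynomial.eval (fun i => (x : Euc d) i) p) ∧
        ∫ x, f x ∂muSph d = 0}

/-- The `H_k`-component of `P ∈ P_n` in the decomposition `P_n = ⊕_{k=1}^n H_k`
(the decomposition is unique; an arbitrary one is chosen if it exists). -/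
noncomputable def harmComponent (d n : ℕ) (P : SphFun d) (k : ℕ) : SphFun d :=
  if h : ∃ c : ℕ → SphFun d, (∀ j, c j ∈ sphHarmonic d j) ∧ P = ∑ j ∈ Finset.Icc 1 n, c j
  then h.choose k else 0

/-- The inner product `⟨P,Q⟩_w = Σ_{k=1}^n w_k ∫ P_k Q_k dμ_d` with `w_k = k(k+d-1)`. -/
noncomputable def innerW (d n : ℕ) (P Q : SphFun d) : ℝ :=
  ∑ k ∈ Finset.Icc 1 n, ((k : ℝ) * ((k : ℝ) + d - 1)) *
    ∫ x, harmComponent d n P k x * harmComponent d n Q k x ∂muSph d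

/-- The norm `‖P‖_w = ⟨P,P⟩_w^{1/2}`. -/
noncomputable def normW (d n : ℕ) (P : SphFun d) : ℝ :=
  Real.sqrt (innerW d n P P)

/-- The function `G_x(y) = g_w((x,y))` on the sphere, for `x ∈ ℝ^{d+1}`. -/
noncomputable def GxFun (d n : ℕ) (x : Euc d) : SphFun d :=
  fun y => (gw d n).eval ⟪x, (y : Euc d)⟫

/-- The extension of a function on the sphere to `ℝ^{d+1} \ {0}` by `x ↦ f(x/‖x‖)`
(with value `0` at the origin). -/
noncomputable def extendSph (d : ℕ) (f : SphFun d) : Euc d → ℝ :=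
  fun x =>
    if hx : x = 0 then 0
    else f ⟨‖x‖⁻¹ • x, by
      rw [mem_sphere_zero_iff_norm, norm_smul, norm_inv, norm_norm,
        inv_mul_cancel₀ (norm_ne_zero_iff.mpr hx)]⟩

/-- The spherical gradient `∇f(x) = (∂/∂x) f(x/‖x‖)`. -/
noncomputable def sphGrad (d : ℕ) (f : SphFun d) (x : Euc d) : Euc d :=
  gradient (extendSph d f) x

/-- The spherical Hessian quadratic form `∇²f(x)·y·y`. -/
noncomputable def sphHessApply (d : ℕ) (f : SphFun d) (x y : Euc d) : ℝ :=
  iteratedFDeriv ℝ 2 (extendSph d f) x ![y, y]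

/-- `‖∇²f(x₀)‖ = max { |∇²f(x₀)·y·y| : ‖y‖ = 1, (y,x₀) = 0 }`. -/
noncomputable def sphHessNorm (d : ℕ) (f : SphFun d) (x₀ : Sph d) : ℝ :=
  sSup {r : ℝ | ∃ y : Euc d, ‖y‖ = 1 ∧ ⟪y, (x₀ : Euc d)⟫ = 0 ∧
    r = |sphHessApply d f (x₀ : Euc d) y|}

/-- `x_1, …, x_N ∈ S^d` form a spherical `n`-design. -/
def IsSphericalDesign (d n N : ℕ) (x : Fin N → Sph d) : Prop :=
  ∀ p : MvPolynomial (Fin (d + 1)) ℝ, p.totalDegree ≤ n →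
    ∫ y, MvPolynomial.eval (fun j => (y : Euc d) j) p ∂muSph d =
      (N : ℝ)⁻¹ * ∑ i, MvPolynomial.eval (fun j => ((x i : Euc d)) j) p

/-- An area-regular partition `R_1, …, R_N` of `S^d`: closed sets with pairwise disjoint
interiors, covering the sphere, each of normalized measure `1/N`. -/
def IsAreaRegularPartition (d N : ℕ) (R : Fin N → Set (Sph d)) : Prop :=
  (∀ i, IsClosed (R i)) ∧ (⋃ i, R i) = Set.univ ∧
    (∀ i j, i ≠ j → interior (R i) ∩ interior (R j) = ∅) ∧
    ∀ i, muSph d (R i) = 1 / N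

/-- The Marcinkiewicz–Zygmund property of degree `m` for points `x_1, …, x_N ∈ S^d`. -/
def MZProperty (d m N : ℕ) (x : Fin N → Sph d) : Prop :=
  ∀ p : MvPolynomial (Fin (d + 1)) ℝ, p.totalDegree ≤ m →
    (1 / 2) * (∫ y, |MvPolynomial.eval (fun j => (y : Euc d) j) p| ∂muSph d) ≤
        (N : ℝ)⁻¹ * ∑ i, |MvPolynomial.eval (fun j => ((x i : Euc d)) j) p| ∧
      (N : ℝ)⁻¹ * ∑ i, |MvPolynomial.eval (fun j => ((x i : Euc d)) j) p| ≤
        (3 / 2) * ∫ y, |MvPolynomial.eval (fun j => (y : Euc d) j) p| ∂muSph d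

/-- The point `x_i(P)`: move `x` along the great circle in the direction of the spherical
gradient `∇P(x)` through angle `‖∇P(x)‖`. -/
noncomputable def movePoint (d : ℕ) (P : SphFun d) (x : Sph d) : Euc d :=
  if _h : sphGrad d P (x : Euc d) = 0 then (x : Euc d)
  else Real.cos ‖sphGrad d P (x : Euc d)‖ • (x : Euc d) +
    Real.sin ‖sphGrad d P (x : Euc d)‖ • (‖sphGrad d P (x : Euc d)‖⁻¹ • sphGrad d P (x : Euc d))

/-- The map `L(P) = (1/N) Σ_i G_{x_i(P)}`. -/
noncomputable def Lmap (d n N : ℕ) (x : Fin N → Sph d) (P : SphFun d) : SphFun d :=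
  (N : ℝ)⁻¹ • ∑ i, GxFun d n (movePoint d P (x i))

end


/-- Evaluation of a polynomial at a point of Euclidean space. -/
noncomputable def evE (d : ℕ) (p : MvPolynomial (Fin (d + 1)) ℝ) (x : Euc d) : ℝ :=
  MvPolynomial.eval (fun i => x i) p

lemma evE_continuous (d : ℕ) (p : MvPolynomial (Fin (d + 1)) ℝ) : Continuous (evE d p) := by
  unfold evE
  exact p.continuous_eval.comp (by fun_prop)

lemma radial_integrable (d m : ℕ) :
    Integrable (fun x : Euc d => ‖x‖ ^ m * Real.exp (-‖x‖ ^ 2)) volume := by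
  have := (integrable_fun_norm_addHaar (volume : Measure (Euc d))
    (f := fun r : ℝ => r ^ m * Real.exp (-r ^ 2))).2
  refine this ?_
  have h := integrableOn_rpow_mul_exp_neg_mul_sq (b := 1) one_pos
    (s := ((d + m : ℕ) : ℝ)) (by have := Nat.cast_nonneg (α := ℝ) (d+m); linarith)
  refine h.congr_fun (fun y hy => ?_) measurableSet_Ioi
  simp only [Real.rpow_natCast, smul_eq_mul]
  simp [pow_add, mul_assoc]

lemma poly_integrable_aux (d : ℕ) (p : MvPolynomial (Fin (d + 1)) ℝ) : ∀ m : ℕ,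
    Integrable (fun x : Euc d => evE d p x * (‖x‖ ^ m * Real.exp (-‖x‖ ^ 2))) volume := by
  induction p using MvPolynomial.induction_on with
  | C a =>
    intro m
    simpa [evE] using (radial_integrable d m).const_mul a
  | add p q hp hq =>
    intro m
    have := (hp m).add (hq m)
    refine this.congr (Filter.Eventually.of_forall fun x => ?_)
    simp [evE, add_mul]
  | mul_X p i hp =>
    intro m
    refine (hp (m + 1)).mono ?_ (Filter.Eventually.of_forall fun x => ?_)
    · have := evE_continuous d (p * MvPolynomial.X i)
      exact Continuous.aestronglyMeasurable (by fun_prop)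
    · have h : |x i| ≤ ‖x‖ := by simpa using PiLp.norm_apply_le x i
      simp only [evE, map_mul, MvPolynomial.eval_X, norm_mul, Real.norm_eq_abs, abs_pow, abs_norm,
        Real.abs_exp, pow_succ]
      have h2 : 0 ≤ |MvPolynomial.eval (fun i => x i) p| * (‖x‖ ^ m * Real.exp (-‖x‖ ^ 2)) := by
        positivity
      have := mul_le_mul_of_nonneg_left h h2
      ring_nf at this ⊢
      exact this

lemma poly_integrable (d : ℕ) (p : MvPolynomial (Fin (d + 1)) ℝ) :
    Integrable (fun x : Euc d => evE d p x * Real.exp (-‖x‖ ^ 2)) volume := by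
  simpa using poly_integrable_aux d p 0

lemma poly_lineDeriv (d : ℕ) (i : Fin (d + 1)) (p : MvPolynomial (Fin (d + 1)) ℝ) (x : Euc d) :
    HasLineDerivAt ℝ (evE d p) (evE d (MvPolynomial.pderiv i p) x) x
      (EuclideanSpace.single i (1 : ℝ)) := by
  unfold HasLineDerivAt
  induction p using MvPolynomial.induction_on with
  | C a => simpa [evE] using hasDerivAt_const (0 : ℝ) a
  | add p q hp hq =>
    refine ((hp.add hq).congr_deriv (by simp [evE])).congr_of_eventuallyEq ?_
    exact Filter.Eventually.of_forall fun t => by simp [evE]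
  | mul_X p j hp =>
    have h1 : HasDerivAt (fun t : ℝ => (x + t • EuclideanSpace.single i (1 : ℝ)) j)
        ((Pi.single i (1 : ℝ) : Fin (d + 1) → ℝ) j) 0 := by
      simpa [PiLp.single_apply, Pi.single_apply] using
        ((hasDerivAt_id (0 : ℝ)).mul_const ((Pi.single i (1 : ℝ) : Fin (d + 1) → ℝ) j)).const_add
          (x j)
    refine ((hp.mul h1).congr_deriv ?_).congr_of_eventuallyEq
      (Filter.Eventually.of_forall fun t => by simp [evE])
    by_cases h : i = j
    · subst h; simp [evE]; ring
    · have h' : ¬ j = i := fun e => h e.symm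
      simp [evE, MvPolynomial.pderiv_X, h]; ring

lemma gauss_lineDeriv (d : ℕ) (i : Fin (d + 1)) (x : Euc d) :
    HasLineDerivAt ℝ (fun x : Euc d => Real.exp (-‖x‖ ^ 2))
      (-2 * x i * Real.exp (-‖x‖ ^ 2)) x (EuclideanSpace.single i (1 : ℝ)) := by
  have h := ((hasStrictFDerivAt_norm_sq x).hasFDerivAt.neg.exp).hasLineDerivAt
    (EuclideanSpace.single i (1 : ℝ))
  have e : (-2 * x i * Real.exp (-‖x‖ ^ 2)) = (Real.exp (-‖x‖ ^ 2) • -(2 • innerSL ℝ x))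
      (EuclideanSpace.single i (1 : ℝ)) := by
    simp [EuclideanSpace.inner_single_right]
    ring
  rw [e]
  exact h

lemma gauss_ibp (d : ℕ) (i : Fin (d + 1)) (p : MvPolynomial (Fin (d + 1)) ℝ) :
    2 * ∫ x : Euc d, evE d (MvPolynomial.X i * p) x * Real.exp (-‖x‖ ^ 2) =
      ∫ x : Euc d, evE d (MvPolynomial.pderiv i p) x * Real.exp (-‖x‖ ^ 2) := by
  have h := integral_bilinear_hasLineDerivAt_right_eq_neg_left_of_integrable
    (μ := (volume : Measure (Euc d))) (B := ContinuousLinearMap.mul ℝ ℝ)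
    (f := evE d p) (f' := evE d (MvPolynomial.pderiv i p))
    (g := fun x => Real.exp (-‖x‖ ^ 2)) (g' := fun x => -2 * x i * Real.exp (-‖x‖ ^ 2))
    (v := EuclideanSpace.single i (1 : ℝ))
    (by simpa using poly_integrable d _)
    (by
      refine ((poly_integrable d (MvPolynomial.X i * p)).const_mul (-2)).congr
        (Filter.Eventually.of_forall fun x => ?_)
      simp [evE]; ring)
    (by simpa using poly_integrable d _)
    (fun x _ => poly_lineDeriv d i p x) (fun x _ => gauss_lineDeriv d i x)
  simp only [ContinuousLinearMap.mul_apply'] at h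
  have h2 : ∫ x : Euc d, evE d p x * (-2 * x i * Real.exp (-‖x‖ ^ 2)) =
      -2 * ∫ x : Euc d, evE d (MvPolynomial.X i * p) x * Real.exp (-‖x‖ ^ 2) := by
    rw [← integral_const_mul]
    congr 1; funext x; simp [evE]; ring
  linarith

lemma evE_smul (d m : ℕ) (p : MvPolynomial (Fin (d + 1)) ℝ) (hp : p.IsHomogeneous m) (r : ℝ)
    (x : Euc d) : evE d p (r • x) = r ^ m * evE d p x := by
  unfold evE
  have h := hp
  rw [MvPolynomial.eval_eq, MvPolynomial.eval_eq, Finset.mul_sum]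
  refine Finset.sum_congr rfl fun s hs => ?_
  have : ∑ i ∈ s.support, s i = m := by
    have := hp.degree_eq_sum_deg_support hs
    exact this.symm
  rw [← this, ← Finset.prod_pow_eq_pow_sum]
  simp only [PiLp.smul_apply, smul_eq_mul, mul_pow, Finset.prod_mul_distrib]
  ring

/-- The radial factor. -/
noncomputable def radC (d m : ℕ) : ℝ :=
  ∫ r : Set.Ioi (0 : ℝ), (r : ℝ) ^ m * Real.exp (-(r : ℝ) ^ 2) ∂(Measure.volumeIoiPow d)

lemma polar_hom (d m : ℕ) (p : MvPolynomial (Fin (d + 1)) ℝ) (hp : p.IsHomogeneous m) :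
    ∫ x : Euc d, evE d p x * Real.exp (-‖x‖ ^ 2) =
      (∫ x : Sph d, evE d p x ∂((volume : Measure (Euc d)).toSphere)) * radC d m := by
  have h1 : ∫ x : Euc d, evE d p x * Real.exp (-‖x‖ ^ 2) =
      ∫ x : ({(0)}ᶜ : Set (Euc d)), evE d p x.1 * Real.exp (-‖x.1‖ ^ 2)
        ∂((volume : Measure (Euc d)).comap (↑)) := by
    rw [integral_subtype_comap (measurableSet_singleton _).compl
      fun x : Euc d => evE d p x * Real.exp (-‖x‖ ^ 2), restrict_compl_singleton]
  have h2 := (volume : Measure (Euc d)).measurePreserving_homeomorphUnitSphereProd.integral_comp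
    (Homeomorph.measurableEmbedding _)
    (fun z : Sph d × Set.Ioi (0 : ℝ) =>
      evE d p z.1 * ((z.2 : ℝ) ^ m * Real.exp (-(z.2 : ℝ) ^ 2)))
  have h3 : Module.finrank ℝ (Euc d) - 1 = d := by simp
  rw [h3] at h2
  have h2' := h2.symm
  rw [h1, radC, ← integral_prod_mul, h2']
  refine integral_congr_ae (Filter.Eventually.of_forall fun x => ?_)
  have hx : ‖(x : Euc d)‖ ≠ 0 := norm_ne_zero_iff.2 x.2
  simp only [homeomorphUnitSphereProd_apply_fst_coe, homeomorphUnitSphereProd_apply_snd_coe]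
  have hc : ‖(x : Euc d)‖⁻¹ ^ m * ‖(x : Euc d)‖ ^ m = 1 := by
    rw [← mul_pow, inv_mul_cancel₀ hx, one_pow]
  rw [evE_smul d m p hp]
  linear_combination (-(evE d p x * Real.exp (-‖(x : Euc d)‖ ^ 2))) * hc

lemma radC_eq (d m : ℕ) : radC d m = 1 / 2 * Real.Gamma (((d : ℝ) + m + 1) / 2) := by
  have h := _root_.integral_rpow_mul_exp_neg_rpow (p := 2) (q := (d : ℝ) + m) two_pos
    (lt_of_lt_of_le (by norm_num) (by positivity : (0 : ℝ) ≤ (d : ℝ) + m))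
  rw [← h, radC, Measure.volumeIoiPow, integral_withDensity_eq_integral_toReal_smul
    (by fun_prop) (Filter.Eventually.of_forall fun _ => ENNReal.ofReal_lt_top),
    ← integral_subtype_comap measurableSet_Ioi]
  refine integral_congr_ae (Filter.Eventually.of_forall fun x => ?_)
  have hx : 0 < (x : ℝ) := x.2
  simp only [smul_eq_mul]
  rw [ENNReal.toReal_ofReal (by positivity), ← Nat.cast_add, Real.rpow_natCast, Real.rpow_two,
    pow_add, mul_assoc]

lemma radC_pos (d m : ℕ) : 0 < radC d m := by
  rw [radC_eq]
  have := Real.Gamma_pos_of_pos (s := ((d : ℝ) + m + 1) / 2) (by positivity)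
  positivity

lemma radC_succ (d m : ℕ) : radC d (m + 2) = ((d : ℝ) + m + 1) / 2 * radC d m := by
  rw [radC_eq, radC_eq]
  have h : ((d : ℝ) + (m + 2 : ℕ) + 1) / 2 = ((d : ℝ) + m + 1) / 2 + 1 := by push_cast; ring
  rw [h, Real.Gamma_add_one (by positivity)]
  ring

/-- Integral of a polynomial over the sphere. -/
noncomputable def sphI (d : ℕ) (p : MvPolynomial (Fin (d + 1)) ℝ) : ℝ :=
  ∫ x : Sph d, evE d p x ∂muSph d

lemma sphI_eq (d : ℕ) (p : MvPolynomial (Fin (d + 1)) ℝ) :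
    sphI d p = ((volume : Measure (Euc d)).toSphere Set.univ)⁻¹.toReal *
      (∫ x : Sph d, evE d p x ∂((volume : Measure (Euc d)).toSphere)) := by
  rw [sphI, muSph, integral_smul_measure, smul_eq_mul]

lemma sphI_ibp (d m : ℕ) (i : Fin (d + 1)) (p : MvPolynomial (Fin (d + 1)) ℝ)
    (hp : p.IsHomogeneous m) :
    ((d : ℝ) + m) * sphI d (MvPolynomial.X i * p) = sphI d (MvPolynomial.pderiv i p) := by
  have h := gauss_ibp d i p
  rw [polar_hom d (1 + m) _ ((MvPolynomial.isHomogeneous_X ℝ i).mul hp),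
    polar_hom d (m - 1) _ hp.pderiv] at h
  rw [sphI_eq, sphI_eq]
  rcases m with _ | m
  · have h0 : MvPolynomial.pderiv i p = 0 := by
      rw [← MvPolynomial.totalDegree_zero_iff_isHomogeneous,
        MvPolynomial.totalDegree_eq_zero_iff_eq_C] at hp
      rw [hp]; simp
    rw [h0] at h ⊢
    simp only [evE, map_zero, integral_zero, zero_mul, mul_zero] at h ⊢
    have := (radC_pos d (1 + 0)).ne'
    have h' : ∫ x : Sph d, MvPolynomial.eval (fun i => (x : Euc d) i) (MvPolynomial.X i * p)
      ∂((volume : Measure (Euc d)).toSphere) = 0 := by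
      by_contra hne
      exact (mul_ne_zero two_ne_zero (mul_ne_zero hne this)) h
    rw [h']; simp
  · rw [show 1 + (m + 1) = m + 2 by ring, radC_succ, show m + 1 - 1 = m by simp] at h
    have := (radC_pos d m).ne'
    have h' := mul_right_cancel₀ this
      (show ((d : ℝ) + (m + 1 : ℕ)) * (∫ x : Sph d, evE d (MvPolynomial.X i * p) x
        ∂((volume : Measure (Euc d)).toSphere)) * radC d m = _ * radC d m by
        rw [← h]; push_cast; ring)
    rw [← h']; ring

instance muSph_prob (d : ℕ) : IsProbabilityMeasure (muSph d) := by
  constructor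
  rw [muSph, Measure.smul_apply, smul_eq_mul]
  refine ENNReal.inv_mul_cancel ?_ (measure_ne_top _ _)
  exact Measure.measure_univ_ne_zero.2 (Measure.toSphere_ne_zero _)

lemma sphI_integrable (d : ℕ) (p : MvPolynomial (Fin (d + 1)) ℝ) :
    Integrable (fun x : Sph d => evE d p x) (muSph d) :=
  ((evE_continuous d p).comp continuous_subtype_val).integrable_of_hasCompactSupport
    (HasCompactSupport.of_compactSpace _)

lemma sphI_add (d : ℕ) (p q : MvPolynomial (Fin (d + 1)) ℝ) :
    sphI d (p + q) = sphI d p + sphI d q := by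
  unfold sphI
  rw [← integral_add (sphI_integrable d p) (sphI_integrable d q)]
  simp [evE]

lemma sphI_C_mul (d : ℕ) (c : ℝ) (q : MvPolynomial (Fin (d + 1)) ℝ) :
    sphI d (MvPolynomial.C c * q) = c * sphI d q := by
  unfold sphI
  rw [← integral_const_mul]
  simp [evE]

lemma sphI_zero (d : ℕ) : sphI d 0 = 0 := by simp [sphI, evE]

lemma sphI_sum {ι : Type*} (d : ℕ) (s : Finset ι) (f : ι → MvPolynomial (Fin (d + 1)) ℝ) :
    sphI d (∑ i ∈ s, f i) = ∑ i ∈ s, sphI d (f i) := by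
  classical
  induction s using Finset.induction_on with
  | empty => simp [sphI_zero]
  | insert a s ha ih => rw [Finset.sum_insert ha, Finset.sum_insert ha, sphI_add, ih]

lemma pd_comm (d : ℕ) (i j : Fin (d + 1)) (p : MvPolynomial (Fin (d + 1)) ℝ) :
    MvPolynomial.pderiv i (MvPolynomial.pderiv j p) =
      MvPolynomial.pderiv j (MvPolynomial.pderiv i p) := by
  induction p using MvPolynomial.induction_on with
  | C a => simp
  | add p q hp hq => simp [hp, hq]
  | mul_X p k hp =>
    simp only [MvPolynomial.pderiv_mul, MvPolynomial.pderiv_X, map_add, hp]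
    have h (a b c : Fin (d + 1)) : MvPolynomial.pderiv a
        ((Pi.single b 1 : Fin (d + 1) → MvPolynomial (Fin (d + 1)) ℝ) c) = 0 := by
      rw [Pi.single_apply]; split_ifs <;> simp
    rw [h, h]; ring

lemma lap_pderiv (d : ℕ) (i : Fin (d + 1)) (p : MvPolynomial (Fin (d + 1)) ℝ)
    (h : polyLaplacian d p = 0) : polyLaplacian d (MvPolynomial.pderiv i p) = 0 := by
  have := congrArg (MvPolynomial.pderiv i) h
  rw [map_zero] at this
  rw [← this]
  unfold polyLaplacian
  rw [map_sum]
  refine Finset.sum_congr rfl fun j _ => ?_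
  rw [pd_comm d i j, pd_comm d i j]

lemma lap_mul (d : ℕ) (p q : MvPolynomial (Fin (d + 1)) ℝ) :
    polyLaplacian d (p * q) = polyLaplacian d p * q +
      2 * ∑ i, MvPolynomial.pderiv i p * MvPolynomial.pderiv i q + p * polyLaplacian d q := by
  unfold polyLaplacian
  simp only [Finset.sum_mul, Finset.mul_sum, ← Finset.sum_add_distrib]
  refine Finset.sum_congr rfl fun j _ => ?_
  simp only [MvPolynomial.pderiv_mul, map_add]
  ring

lemma harm_mean (d : ℕ) (hd : 1 ≤ d) (k : ℕ) (f : MvPolynomial (Fin (d + 1)) ℝ)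
    (hf : f.IsHomogeneous (k + 1)) (hl : polyLaplacian d f = 0) : sphI d f = 0 := by
  have e := hf.sum_X_mul_pderiv
  have h1 := congrArg (sphI d) e
  have h2 : ∑ i, ((d : ℝ) + k) * sphI d (MvPolynomial.X i * MvPolynomial.pderiv i f) = 0 := by
    rw [← sphI_zero d, ← hl, polyLaplacian, sphI_sum]
    exact Finset.sum_congr rfl fun i _ => sphI_ibp d k i _ hf.pderiv
  rw [← Finset.mul_sum, ← sphI_sum, h1, nsmul_eq_mul,
    ← map_natCast (MvPolynomial.C (R := ℝ) (σ := Fin (d + 1))) (k + 1), sphI_C_mul] at h2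
  have hd' : (0 : ℝ) < (d : ℝ) + k := by
    have : (1 : ℝ) ≤ d := by exact_mod_cast hd
    positivity
  have : ((k + 1 : ℕ) : ℝ) ≠ 0 := by positivity
  simpa [hd'.ne', Nat.cast_add_one_ne_zero k] using h2

lemma harm_orth (d : ℕ) (hd : 1 ≤ d) : ∀ (j k : ℕ) (f q : MvPolynomial (Fin (d + 1)) ℝ),
    f.IsHomogeneous k → polyLaplacian d f = 0 → q.IsHomogeneous j → j < k →
    sphI d (f * q) = 0 := by
  intro j
  induction j using Nat.strong_induction_on with
  | _ j ih =>
  intro k f q hf hl hq hjk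
  obtain ⟨k, rfl⟩ : ∃ k', k = k' + 1 := ⟨k - 1, by omega⟩
  rcases j with _ | j
  · rw [← MvPolynomial.totalDegree_zero_iff_isHomogeneous,
      MvPolynomial.totalDegree_eq_zero_iff_eq_C] at hq
    rw [hq, mul_comm, sphI_C_mul, harm_mean d hd k f hf hl, mul_zero]
  · have e := hq.sum_X_mul_pderiv
    have h1 : f * ((j + 1) • q) = ∑ i, MvPolynomial.X i * (f * MvPolynomial.pderiv i q) := by
      rw [← e, Finset.mul_sum]
      exact Finset.sum_congr rfl fun i _ => by ring
    have hd' : (0 : ℝ) < (d : ℝ) + ((k + 1 + j : ℕ) : ℝ) := by positivity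
    have h3 : ∀ i, sphI d (MvPolynomial.X i * (f * MvPolynomial.pderiv i q)) = 0 := by
      intro i
      have h := sphI_ibp d (k + 1 + j) i (f * MvPolynomial.pderiv i q) (hf.mul hq.pderiv)
      rw [MvPolynomial.pderiv_mul, sphI_add,
        ih j (by omega) k _ _ hf.pderiv (lap_pderiv d i f hl) hq.pderiv (by omega),
        ih (j - 1) (by omega) (k + 1) _ _ hf hl (hq.pderiv (i := i)).pderiv (by omega),
        add_zero] at h
      exact (mul_eq_zero.1 h).resolve_left hd'.ne'
    have h4 := congrArg (sphI d) h1
    rw [sphI_sum, Finset.sum_eq_zero (fun i _ => h3 i), nsmul_eq_mul,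
      ← map_natCast (MvPolynomial.C (R := ℝ) (σ := Fin (d + 1))) (j + 1), mul_left_comm,
      sphI_C_mul] at h4
    exact (mul_eq_zero.1 h4).resolve_left (by positivity)

/-- The linear form `⟨x, ·⟩` as a polynomial. -/
noncomputable def linF (d : ℕ) (x : Euc d) : MvPolynomial (Fin (d + 1)) ℝ :=
  ∑ i, MvPolynomial.C (x i) * MvPolynomial.X i

/-- The squared norm as a polynomial. -/
noncomputable def rhoF (d : ℕ) : MvPolynomial (Fin (d + 1)) ℝ :=
  ∑ i, MvPolynomial.X i ^ 2

/-- Directional derivative on polynomials. -/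
noncomputable def dirD (d : ℕ) (x : Euc d) (p : MvPolynomial (Fin (d + 1)) ℝ) :
    MvPolynomial (Fin (d + 1)) ℝ :=
  ∑ i, MvPolynomial.C (x i) * MvPolynomial.pderiv i p

lemma linF_hom (d : ℕ) (x : Euc d) : (linF d x).IsHomogeneous 1 :=
  MvPolynomial.IsHomogeneous.sum _ _ _ fun i _ => MvPolynomial.isHomogeneous_C_mul_X _ _

lemma rhoF_hom (d : ℕ) : (rhoF d).IsHomogeneous 2 :=
  MvPolynomial.IsHomogeneous.sum _ _ _ fun i _ => MvPolynomial.isHomogeneous_X_pow i 2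

lemma pd_linF (d : ℕ) (x : Euc d) (i : Fin (d + 1)) :
    MvPolynomial.pderiv i (linF d x) = MvPolynomial.C (x i) := by
  rw [linF, map_sum, Finset.sum_eq_single i]
  · simp
  · intro b _ hb
    simp [MvPolynomial.pderiv_X_of_ne hb]
  · simp

lemma pd_rhoF (d : ℕ) (i : Fin (d + 1)) :
    MvPolynomial.pderiv i (rhoF d) = 2 * MvPolynomial.X i := by
  rw [rhoF, map_sum, Finset.sum_eq_single i]
  · simp
  · intro b _ hb
    simp [MvPolynomial.pderiv_X_of_ne hb]
  · simp

lemma evE_linF (d : ℕ) (x z : Euc d) : evE d (linF d x) z = ⟪x, z⟫ := by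
  simp [evE, linF, PiLp.inner_apply, mul_comm]

lemma evE_rhoF (d : ℕ) (z : Euc d) : evE d (rhoF d) z = ‖z‖ ^ 2 := by
  simp [evE, rhoF, EuclideanSpace.real_norm_sq_eq]

lemma harm_repro (d : ℕ) (hd : 1 ≤ d) (x : Euc d) : ∀ (k : ℕ)
    (f : MvPolynomial (Fin (d + 1)) ℝ), f.IsHomogeneous k → polyLaplacian d f = 0 →
    (∏ j ∈ Finset.range k, ((d : ℝ) + 2 * j + 1)) * sphI d (f * linF d x ^ k) =
      (k.factorial : ℝ) * evE d f x := by
  intro k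
  induction k with
  | zero =>
    intro f hf hl
    rw [← MvPolynomial.totalDegree_zero_iff_isHomogeneous,
      MvPolynomial.totalDegree_eq_zero_iff_eq_C] at hf
    rw [hf]
    simp [sphI, evE]
  | succ k ih =>
    intro f hf hl
    have hpow : (linF d x ^ k).IsHomogeneous k := by simpa using (linF_hom d x).pow k
    have h1 : f * linF d x ^ (k + 1) =
        ∑ i, MvPolynomial.C (x i) * (MvPolynomial.X i * (f * linF d x ^ k)) := by
      rw [pow_succ]
      nth_rewrite 2 [linF]
      rw [Finset.mul_sum, Finset.mul_sum]
      exact Finset.sum_congr rfl fun i _ => by ring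
    have h2 : ∀ i, ((d : ℝ) + 2 * k + 1) * sphI d (MvPolynomial.X i * (f * linF d x ^ k)) =
        sphI d (MvPolynomial.pderiv i f * linF d x ^ k) := by
      intro i
      have h := sphI_ibp d (k + 1 + k) i _ (hf.mul hpow)
      have h0 : sphI d (f * MvPolynomial.pderiv i (linF d x ^ k)) = 0 :=
        harm_orth d hd (k - 1) (k + 1) _ _ hf hl hpow.pderiv (by omega)
      rw [MvPolynomial.pderiv_mul, sphI_add, h0, add_zero] at h
      rw [← h]; push_cast; ring
    have e := congrArg (fun p => evE d p x) hf.sum_X_mul_pderiv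
    simp only [evE, map_sum, map_mul, MvPolynomial.eval_X, map_nsmul] at e
    rw [h1, sphI_sum, Finset.prod_range_succ, mul_assoc, Finset.mul_sum, Finset.mul_sum]
    have h3 : ∀ i, (∏ j ∈ Finset.range k, ((d : ℝ) + 2 * j + 1)) * (((d : ℝ) + 2 * k + 1) *
        sphI d (MvPolynomial.C (x i) * (MvPolynomial.X i * (f * linF d x ^ k)))) =
        (k.factorial : ℝ) * (x i * evE d (MvPolynomial.pderiv i f) x) := by
      intro i
      have := ih (MvPolynomial.pderiv i f) hf.pderiv (lap_pderiv d i f hl)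
      rw [sphI_C_mul, mul_left_comm _ (x i), h2, mul_left_comm _ (x i), this]; ring
    rw [Finset.sum_congr rfl fun i _ => h3 i, ← Finset.mul_sum, Nat.factorial_succ]
    unfold evE
    rw [e]
    simp
    ring

/-- The homogenized Gegenbauer polynomial. -/
noncomputable def hGeg (d : ℕ) (α : ℝ) (x : Euc d) : ℕ → MvPolynomial (Fin (d + 1)) ℝ
  | 0 => 1
  | 1 => MvPolynomial.C (2 * α) * linF d x
  | n + 2 =>
      MvPolynomial.C (2 * ((n : ℝ) + 1 + α) / ((n : ℝ) + 2)) * (linF d x * hGeg d α x (n + 1)) -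
        MvPolynomial.C (((n : ℝ) + 2 * α) / ((n : ℝ) + 2)) * (rhoF d * hGeg d α x n)

lemma hGeg_hom (d : ℕ) (α : ℝ) (x : Euc d) : ∀ k, (hGeg d α x k).IsHomogeneous k
  | 0 => MvPolynomial.isHomogeneous_one _ _
  | 1 => (linF_hom d x).C_mul _
  | n + 2 => by
    rw [hGeg]
    refine MvPolynomial.IsHomogeneous.sub ?_ ?_
    · have := ((linF_hom d x).mul (hGeg_hom d α x (n + 1))).C_mul
        (2 * ((n : ℝ) + 1 + α) / ((n : ℝ) + 2))
      rwa [show 1 + (n + 1) = n + 2 by ring] at this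
    · have := ((rhoF_hom d).mul (hGeg_hom d α x n)).C_mul (((n : ℝ) + 2 * α) / ((n : ℝ) + 2))
      rwa [add_comm 2 n] at this

lemma hGeg_eval (d : ℕ) (α : ℝ) (x z : Euc d) (hz : ‖z‖ = 1) : ∀ k,
    evE d (hGeg d α x k) z = (gegenbauer α k).eval ⟪x, z⟫
  | 0 => by simp [hGeg, gegenbauer, evE]
  | 1 => by
    have := evE_linF d x z
    unfold evE at this
    simp [hGeg, gegenbauer, evE, this]
  | n + 2 => by
    have h1 := hGeg_eval d α x z hz (n + 1)
    have h2 := hGeg_eval d α x z hz n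
    have h3 := evE_linF d x z
    have h4 := evE_rhoF d z
    rw [hz] at h4
    unfold evE at *
    rw [hGeg, gegenbauer]
    simp [h1, h2, h3, h4]

lemma dirD_mul (d : ℕ) (x : Euc d) (p q : MvPolynomial (Fin (d + 1)) ℝ) :
    dirD d x (p * q) = dirD d x p * q + p * dirD d x q := by
  unfold dirD
  simp only [Finset.sum_mul, Finset.mul_sum, ← Finset.sum_add_distrib]
  refine Finset.sum_congr rfl fun j _ => ?_
  rw [MvPolynomial.pderiv_mul]; ring

lemma dirD_sub (d : ℕ) (x : Euc d) (p q : MvPolynomial (Fin (d + 1)) ℝ) :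
    dirD d x (p - q) = dirD d x p - dirD d x q := by
  unfold dirD
  simp [mul_sub]

lemma dirD_C_mul (d : ℕ) (x : Euc d) (c : ℝ) (q : MvPolynomial (Fin (d + 1)) ℝ) :
    dirD d x (MvPolynomial.C c * q) = MvPolynomial.C c * dirD d x q := by
  rw [dirD_mul]
  simp [dirD]

lemma dirD_linF (d : ℕ) (x : Euc d) (hx : ‖x‖ = 1) : dirD d x (linF d x) = 1 := by
  unfold dirD
  simp only [pd_linF, ← map_mul, ← map_sum]
  have : ∑ i, x i * x i = 1 := by
    have := EuclideanSpace.real_norm_sq_eq x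
    rw [hx] at this
    simp only [sq] at this
    linarith
  rw [this, map_one]

lemma dirD_rhoF (d : ℕ) (x : Euc d) : dirD d x (rhoF d) = 2 * linF d x := by
  unfold dirD linF
  rw [Finset.mul_sum]
  refine Finset.sum_congr rfl fun j _ => ?_
  rw [pd_rhoF]; ring

lemma dirD_hGeg (d : ℕ) (α : ℝ) (x : Euc d) (hx : ‖x‖ = 1) : ∀ n,
    dirD d x (hGeg d α x (n + 1)) = MvPolynomial.C ((n : ℝ) + 2 * α) * hGeg d α x n
  | 0 => by
    rw [hGeg, hGeg, dirD_C_mul, dirD_linF d x hx]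
    simp
  | 1 => by
    have hr : hGeg d α x (1 + 1) = MvPolynomial.C (2 * (((0 : ℕ) : ℝ) + 1 + α) / (((0 : ℕ) : ℝ) + 2)) *
        (linF d x * hGeg d α x (0 + 1)) -
        MvPolynomial.C ((((0 : ℕ) : ℝ) + 2 * α) / (((0 : ℕ) : ℝ) + 2)) * (rhoF d * hGeg d α x 0) :=
      hGeg.eq_3 d α x 0
    rw [hr, dirD_sub, dirD_C_mul, dirD_C_mul, dirD_mul, dirD_mul, dirD_linF d x hx, dirD_rhoF,
      dirD_hGeg d α x hx 0]
    have h1 : dirD d x (hGeg d α x 0) = 0 := by simp [hGeg, dirD]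
    rw [h1]
    simp only [hGeg]
    have h2 : (MvPolynomial.C 2 : MvPolynomial (Fin (d + 1)) ℝ) = 2 := map_ofNat MvPolynomial.C 2
    have e : (MvPolynomial.C (2 * ((0 : ℕ) + 1 + α) / ((0 : ℕ) + 2)) *
        (MvPolynomial.C (2 * α) + MvPolynomial.C ((0 : ℕ) + 2 * α)) -
        MvPolynomial.C (((0 : ℕ) + 2 * α) / ((0 : ℕ) + 2)) * MvPolynomial.C 2 :
        MvPolynomial (Fin (d + 1)) ℝ) =
        MvPolynomial.C ((1 : ℕ) + 2 * α) * MvPolynomial.C (2 * α) := by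
      simp only [← map_mul, ← map_add, ← map_sub]
      congr 1; push_cast; field_simp; ring
    rw [h2] at e
    linear_combination linF d x * e
  | n + 2 => by
    have h1 := dirD_hGeg d α x hx (n + 1)
    have h0 := dirD_hGeg d α x hx n
    rw [hGeg, dirD_sub, dirD_C_mul, dirD_C_mul, dirD_mul, dirD_mul, dirD_linF d x hx, dirD_rhoF,
      h1, h0]
    have hr : hGeg d α x (n + 2) = MvPolynomial.C (2 * ((n : ℝ) + 1 + α) / ((n : ℝ) + 2)) *
        (linF d x * hGeg d α x (n + 1)) -
        MvPolynomial.C (((n : ℝ) + 2 * α) / ((n : ℝ) + 2)) * (rhoF d * hGeg d α x n) := by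
      rw [hGeg]
    have h2 : (MvPolynomial.C 2 : MvPolynomial (Fin (d + 1)) ℝ) = 2 := map_ofNat MvPolynomial.C 2
    have hn3 : ((n : ℝ) + 1 + 2) ≠ 0 := by positivity
    have hn2 : ((n : ℝ) + 2) ≠ 0 := by positivity
    have hm : (MvPolynomial.C ((n : ℝ) + 2) : MvPolynomial (Fin (d + 1)) ℝ) *
        hGeg d α x (n + 2) = MvPolynomial.C (2 * ((n : ℝ) + 1 + α)) *
        (linF d x * hGeg d α x (n + 1)) -
        MvPolynomial.C ((n : ℝ) + 2 * α) * (rhoF d * hGeg d α x n) := by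
      have c1 : (MvPolynomial.C ((n : ℝ) + 2) * MvPolynomial.C (2 * ((n : ℝ) + 1 + α) /
          ((n : ℝ) + 2)) : MvPolynomial (Fin (d + 1)) ℝ) =
          MvPolynomial.C (2 * ((n : ℝ) + 1 + α)) := by
        rw [← map_mul]; congr 1; field_simp
      have c2 : (MvPolynomial.C ((n : ℝ) + 2) * MvPolynomial.C (((n : ℝ) + 2 * α) /
          ((n : ℝ) + 2)) : MvPolynomial (Fin (d + 1)) ℝ) =
          MvPolynomial.C ((n : ℝ) + 2 * α) := by
        rw [← map_mul]; congr 1; field_simp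
      rw [hr]
      linear_combination (linF d x * hGeg d α x (n + 1)) * c1 - (rhoF d * hGeg d α x n) * c2
    have e1 : (MvPolynomial.C (2 * (((n + 1 : ℕ) : ℝ) + 1 + α) / (((n + 1 : ℕ) : ℝ) + 2)) +
        MvPolynomial.C ((((n + 1 : ℕ) : ℝ) + 2 * α) / (((n + 1 : ℕ) : ℝ) + 2)) *
          MvPolynomial.C ((n : ℝ) + 2) :
        MvPolynomial (Fin (d + 1)) ℝ) = MvPolynomial.C (((n + 2 : ℕ) : ℝ) + 2 * α) := by
      simp only [← map_mul, ← map_add, ← map_sub]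
      congr 1; push_cast; field_simp; ring
    have e2 : (MvPolynomial.C (2 * (((n + 1 : ℕ) : ℝ) + 1 + α) / (((n + 1 : ℕ) : ℝ) + 2)) *
        MvPolynomial.C (((n + 1 : ℕ) : ℝ) + 2 * α) :
        MvPolynomial (Fin (d + 1)) ℝ) =
        MvPolynomial.C ((((n + 1 : ℕ) : ℝ) + 2 * α) / (((n + 1 : ℕ) : ℝ) + 2)) *
          (MvPolynomial.C 2 + MvPolynomial.C (2 * ((n : ℝ) + 1 + α))) := by
      simp only [← map_mul, ← map_add, ← map_sub]
      congr 1; push_cast; field_simp; ring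
    rw [h2] at e2
    linear_combination (linF d x * hGeg d α x (n + 1)) * e2 + hGeg d α x (n + 2) * e1 -
      MvPolynomial.C ((((n + 1 : ℕ) : ℝ) + 2 * α) / (((n + 1 : ℕ) : ℝ) + 2)) * hm

lemma lap_linF_mul (d : ℕ) (x : Euc d) (p : MvPolynomial (Fin (d + 1)) ℝ) :
    polyLaplacian d (linF d x * p) = 2 * dirD d x p + linF d x * polyLaplacian d p := by
  have h : polyLaplacian d (linF d x) = 0 := by simp [polyLaplacian, pd_linF]
  rw [lap_mul, h, dirD]
  simp [pd_linF]

lemma lap_rhoF_mul (d n : ℕ) (p : MvPolynomial (Fin (d + 1)) ℝ) (hp : p.IsHomogeneous n) :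
    polyLaplacian d (rhoF d * p) = MvPolynomial.C (2 * ((d : ℝ) + 1) + 4 * n) * p +
      rhoF d * polyLaplacian d p := by
  have h2 : (MvPolynomial.C 2 : MvPolynomial (Fin (d + 1)) ℝ) = 2 := map_ofNat MvPolynomial.C 2
  have h : polyLaplacian d (rhoF d) = MvPolynomial.C (2 * ((d : ℝ) + 1)) := by
    simp only [polyLaplacian, pd_rhoF]
    rw [← h2]
    simp only [MvPolynomial.pderiv_C_mul, MvPolynomial.pderiv_X_self]
    simp
    ring
  have h4 : (MvPolynomial.C 4 : MvPolynomial (Fin (d + 1)) ℝ) = 4 := map_ofNat MvPolynomial.C 4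
  have e := hp.sum_X_mul_pderiv
  rw [lap_mul, h]
  simp only [pd_rhoF, mul_assoc]
  rw [← Finset.mul_sum, e]
  simp [h4]
  ring

lemma hGeg_harm (d : ℕ) (x : Euc d) (hx : ‖x‖ = 1) : ∀ k,
    polyLaplacian d (hGeg d (((d : ℝ) - 1) / 2) x k) = 0
  | 0 => by simp [hGeg, polyLaplacian]
  | 1 => by simp [hGeg, polyLaplacian, pd_linF]
  | n + 2 => by
    have h1 := hGeg_harm d x hx (n + 1)
    have h0 := hGeg_harm d x hx n
    have hs (c c' : ℝ) (p q : MvPolynomial (Fin (d + 1)) ℝ) :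
        polyLaplacian d (MvPolynomial.C c * p - MvPolynomial.C c' * q) =
        MvPolynomial.C c * polyLaplacian d p - MvPolynomial.C c' * polyLaplacian d q := by
      simp [polyLaplacian, Finset.mul_sum]
    rw [hGeg, hs, lap_linF_mul, lap_rhoF_mul d n _ (hGeg_hom d _ x n), h1, h0,
      dirD_hGeg d _ x hx n]
    have h2 : (MvPolynomial.C 2 : MvPolynomial (Fin (d + 1)) ℝ) = 2 := map_ofNat MvPolynomial.C 2
    have hn2 : ((n : ℝ) + 2) ≠ 0 := by positivity
    have e : (MvPolynomial.C (2 * ((n : ℝ) + 1 + ((d : ℝ) - 1) / 2) / ((n : ℝ) + 2)) *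
        (MvPolynomial.C 2 * MvPolynomial.C ((n : ℝ) + 2 * (((d : ℝ) - 1) / 2))) :
        MvPolynomial (Fin (d + 1)) ℝ) =
        MvPolynomial.C (((n : ℝ) + 2 * (((d : ℝ) - 1) / 2)) / ((n : ℝ) + 2)) *
          MvPolynomial.C (2 * ((d : ℝ) + 1) + 4 * n) := by
      simp only [← map_mul]
      congr 1; field_simp; ring
    rw [h2] at e
    linear_combination hGeg d (((d : ℝ) - 1) / 2) x n * e

lemma geg_natDegree (α : ℝ) : ∀ k, (gegenbauer α k).natDegree ≤ k
  | 0 => by simp [gegenbauer]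
  | 1 => by
    rw [gegenbauer]
    exact (Polynomial.natDegree_C_mul_le _ _).trans Polynomial.natDegree_X_le
  | n + 2 => by
    rw [gegenbauer]
    refine (Polynomial.natDegree_sub_le _ _).trans (max_le ?_ ?_)
    · refine (Polynomial.natDegree_C_mul_le _ _).trans (Polynomial.natDegree_mul_le.trans ?_)
      have := geg_natDegree α (n + 1)
      have h2 : (Polynomial.X : Polynomial ℝ).natDegree ≤ 1 := Polynomial.natDegree_X_le
      omega
    · refine (Polynomial.natDegree_C_mul_le _ _).trans ?_
      have := geg_natDegree α n
      omega

lemma geg_lead (α : ℝ) : ∀ k, (k.factorial : ℝ) * (gegenbauer α k).coeff k =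
    ∏ j ∈ Finset.range k, (2 * α + 2 * j)
  | 0 => by simp [gegenbauer]
  | 1 => by simp [gegenbauer]
  | n + 2 => by
    have h1 := geg_lead α (n + 1)
    have h0 : (gegenbauer α n).coeff (n + 2) = 0 :=
      Polynomial.coeff_eq_zero_of_natDegree_lt (by have := geg_natDegree α n; omega)
    rw [Finset.prod_range_succ, ← h1, gegenbauer, Polynomial.coeff_sub, Polynomial.coeff_C_mul,
      Polynomial.coeff_C_mul, h0, Polynomial.coeff_X_mul, Nat.factorial_succ (n + 1)]
    push_cast
    have : (n : ℝ) + 2 ≠ 0 := by positivity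
    field_simp
    ring

lemma repro_geg (d : ℕ) (hd : 1 ≤ d) (x : Euc d) (k : ℕ) (f : MvPolynomial (Fin (d + 1)) ℝ)
    (hf : f.IsHomogeneous k) (hl : polyLaplacian d f = 0) :
    ((d : ℝ) + 2 * k - 1) * sphI d (f * hGeg d (((d : ℝ) - 1) / 2) x k) =
      ((d : ℝ) - 1) * evE d f x := by
  set α : ℝ := ((d : ℝ) - 1) / 2 with hα
  have h1 : sphI d (f * hGeg d α x k) = sphI d (∑ j ∈ Finset.range (k + 1),
      MvPolynomial.C ((gegenbauer α k).coeff j) * (f * linF d x ^ j)) := by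
    unfold sphI
    congr 1
    ext z
    have hz : ‖(z : Euc d)‖ = 1 := by simp
    have e1 := hGeg_eval d α x z hz k
    rw [Polynomial.eval_eq_sum_range' (Nat.lt_succ_of_le (geg_natDegree α k)), ← evE_linF] at e1
    simp only [evE, map_mul, map_sum, map_pow, MvPolynomial.eval_C] at e1 ⊢
    rw [e1, Finset.mul_sum]
    exact Finset.sum_congr rfl fun j _ => by ring
  have h2 : sphI d (f * hGeg d α x k) =
      (gegenbauer α k).coeff k * sphI d (f * linF d x ^ k) := by
    rw [h1, sphI_sum, Finset.sum_range_succ, Finset.sum_eq_zero, zero_add, sphI_C_mul]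
    intro j hj
    rw [sphI_C_mul, harm_orth d hd j k f _ hf hl (by simpa using (linF_hom d x).pow j)
      (Finset.mem_range.1 hj), mul_zero]
  have h3 := harm_repro d hd x k f hf hl
  have h4 := geg_lead α k
  have h5 : ((d : ℝ) + 2 * k - 1) * ∏ j ∈ Finset.range k, (2 * α + 2 * (j : ℝ)) =
      ((d : ℝ) - 1) * ∏ j ∈ Finset.range k, ((d : ℝ) + 2 * j + 1) := by
    have e1 := Finset.prod_range_succ (fun j : ℕ => (2 * α + 2 * (j : ℝ))) k
    rw [Finset.prod_range_succ'] at e1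
    have e2 : ∏ j ∈ Finset.range k, (2 * α + 2 * ((j + 1 : ℕ) : ℝ)) =
        ∏ j ∈ Finset.range k, ((d : ℝ) + 2 * j + 1) :=
      Finset.prod_congr rfl fun j _ => by rw [hα]; push_cast; ring
    rw [e2] at e1
    have e3 : 2 * α = (d : ℝ) - 1 := by rw [hα]; ring
    simp only [e3] at e1 ⊢
    push_cast at e1
    linear_combination -e1
  have hk : (k.factorial : ℝ) ≠ 0 := by positivity
  apply mul_left_cancel₀ hk
  rw [h2]
  calc _ = ((d : ℝ) + 2 * k - 1) * ((k.factorial : ℝ) * (gegenbauer α k).coeff k) *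
        sphI d (f * linF d x ^ k) := by ring
    _ = _ := by rw [h4, h5, mul_assoc, h3]; ring

lemma geg_one (d : ℕ) : ∀ k : ℕ, ((k : ℝ) + 1) * (gegenbauer (((d : ℝ) - 1) / 2) (k + 1)).eval 1 =
    ((k : ℝ) + d - 1) * (gegenbauer (((d : ℝ) - 1) / 2) k).eval 1
  | 0 => by simp [gegenbauer]; ring
  | n + 1 => by
    have h := geg_one d n
    rw [gegenbauer]
    simp only [Polynomial.eval_sub, Polynomial.eval_mul, Polynomial.eval_C, Polynomial.eval_X]
    have : (n : ℝ) + 2 ≠ 0 := by positivity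
    push_cast
    field_simp
    linear_combination ((n : ℝ) + 2) * h

/-- The coefficient in `g_w`. -/
noncomputable def lamG (d k : ℕ) : ℝ :=
  dimHarm d k / (((k : ℝ) * ((k : ℝ) + d - 1)) * (gegenbauer (((d : ℝ) - 1) / 2) k).eval 1)

lemma geg_one' (d : ℕ) (hd : 1 ≤ d) : ∀ k : ℕ, ((k : ℝ) + d) *
    (gegenbauer (((d : ℝ) - 1) / 2) (k + 1)).eval 1 =
    ((d : ℝ) - 1) * (Nat.choose (d + k) (k + 1) : ℝ)
  | 0 => by simp [gegenbauer]; ring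
  | k + 1 => by
    have h := geg_one' d hd k
    have h2 := geg_one d (k + 1)
    have h3 := Nat.add_one_mul_choose_eq (d + k) (k + 1)
    have h3' : ((d : ℝ) + k + 1) * (Nat.choose (d + k) (k + 1) : ℝ) =
      (Nat.choose (d + (k + 1)) (k + 1 + 1) : ℝ) * (k + 1 + 1) := by exact_mod_cast h3
    push_cast at h h2 ⊢
    have hk : (k : ℝ) + 1 + 1 ≠ 0 := by positivity
    apply mul_left_cancel₀ hk
    linear_combination ((k : ℝ) + 1 + d) * h2 + ((k : ℝ) + 1 + d) * h + ((d : ℝ) - 1) * h3'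

lemma lam_key (d : ℕ) (hd : 1 ≤ d) (k : ℕ) :
    ((k + 1 : ℕ) * ((k + 1 : ℕ) + (d : ℝ) - 1)) * lamG d (k + 1) ^ 2 * ((d : ℝ) - 1) =
      lamG d (k + 1) * ((d : ℝ) + 2 * (k + 1 : ℕ) - 1) := by
  have h := geg_one' d hd k
  unfold lamG dimHarm
  rw [show d + (k + 1) - 1 = d + k by omega]
  set g := (gegenbauer (((d : ℝ) - 1) / 2) (k + 1)).eval 1
  set b : ℝ := (Nat.choose (d + k) (k + 1) : ℝ)
  have hd' : (1 : ℝ) ≤ d := by exact_mod_cast hd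
  by_cases hg : g = 0
  · simp [hg]
  have hkd : (k : ℝ) + d ≠ 0 := by positivity
  have hk : (k : ℝ) + 1 ≠ 0 := by positivity
  have e : (((k + 1 : ℕ) : ℝ) + (d : ℝ) - 1) = k + d := by push_cast; ring
  rw [e]
  push_cast
  have : b * (d - 1) = (k + d) * g := by linarith
  field_simp
  linear_combination (2 * (k + 1) + (d : ℝ) - 1) ^ 2 * b * this

lemma lap_C_mul (d : ℕ) (c : ℝ) (p : MvPolynomial (Fin (d + 1)) ℝ) :
    polyLaplacian d (MvPolynomial.C c * p) = MvPolynomial.C c * polyLaplacian d p := by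
  simp [polyLaplacian, Finset.mul_sum]

lemma lap_add (d : ℕ) (p q : MvPolynomial (Fin (d + 1)) ℝ) :
    polyLaplacian d (p + q) = polyLaplacian d p + polyLaplacian d q := by
  simp [polyLaplacian, Finset.sum_add_distrib]

lemma lap_sum {ι : Type*} (d : ℕ) (s : Finset ι) (f : ι → MvPolynomial (Fin (d + 1)) ℝ) :
    polyLaplacian d (∑ i ∈ s, f i) = ∑ i ∈ s, polyLaplacian d (f i) := by
  classical
  induction s using Finset.induction_on with
  | empty => simp [polyLaplacian]
  | insert a s ha ih => rw [Finset.sum_insert ha, Finset.sum_insert ha, lap_add, ih]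

lemma sphHarm_cont (d k : ℕ) (f : SphFun d) (hf : f ∈ sphHarmonic d k) : Continuous f := by
  obtain ⟨p, -, -, h⟩ := hf
  have : f = fun x : Sph d => evE d p x := funext h
  rw [this]
  exact (evE_continuous d p).comp continuous_subtype_val

lemma cont_integrable (d : ℕ) (f : SphFun d) (hf : Continuous f) : Integrable f (muSph d) :=
  hf.integrable_of_hasCompactSupport (HasCompactSupport.of_compactSpace _)

lemma sphHarm_sub (d k : ℕ) (f g : SphFun d) (hf : f ∈ sphHarmonic d k)
    (hg : g ∈ sphHarmonic d k) : f - g ∈ sphHarmonic d k := by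
  obtain ⟨p, hp, lp, h⟩ := hf
  obtain ⟨q, hq, lq, h'⟩ := hg
  refine ⟨p + MvPolynomial.C (-1) * q, hp.add (hq.C_mul _), ?_, ?_⟩
  · rw [lap_add, lap_C_mul, lp, lq]; simp
  · intro x; simp [h, h', sub_eq_add_neg]

lemma sphHarm_orth (d : ℕ) (hd : 1 ≤ d) (j k : ℕ) (hjk : j ≠ k) (f g : SphFun d)
    (hf : f ∈ sphHarmonic d j) (hg : g ∈ sphHarmonic d k) :
    ∫ z, f z * g z ∂muSph d = 0 := by
  obtain ⟨p, hp, lp, h⟩ := hf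
  obtain ⟨q, hq, lq, h'⟩ := hg
  simp only [h, h']
  rcases lt_or_gt_of_ne hjk with hlt | hlt
  · rw [← harm_orth d hd j k q p hq lq hp hlt, sphI]
    simp [evE, mul_comm]
  · rw [← harm_orth d hd k j p q hp lp hq hlt, sphI]
    simp [evE]

lemma comp_ae (d n : ℕ) (hd : 1 ≤ d) (c c' : ℕ → SphFun d) (hc : ∀ j, c j ∈ sphHarmonic d j)
    (hc' : ∀ j, c' j ∈ sphHarmonic d j)
    (h : ∑ j ∈ Finset.Icc 1 n, c j = ∑ j ∈ Finset.Icc 1 n, c' j) (k : ℕ)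
    (hk : k ∈ Finset.Icc 1 n) : c k =ᵐ[muSph d] c' k := by
  have hd' : ∀ j, c j - c' j ∈ sphHarmonic d j := fun j => sphHarm_sub d j _ _ (hc j) (hc' j)
  have hcont : ∀ j, Continuous (c j - c' j) := fun j => sphHarm_cont d j _ (hd' j)
  have h0 : ∀ z, ∑ j ∈ Finset.Icc 1 n, (c j - c' j) z = 0 := by
    intro z
    have := congrFun h z
    simp only [Finset.sum_apply] at this
    simp [Finset.sum_sub_distrib, this]
  have h1 : ∫ z, (c k - c' k) z * (c k - c' k) z ∂muSph d = 0 := by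
    have e : ∑ j ∈ Finset.Icc 1 n, ∫ z, (c k - c' k) z * (c j - c' j) z ∂muSph d = 0 := by
      rw [← integral_finsetSum]
      · simp only [← Finset.mul_sum, h0, mul_zero, integral_zero]
      · exact fun j _ => cont_integrable d _ ((hcont k).mul (hcont j))
    rwa [Finset.sum_eq_single_of_mem k hk] at e
    exact fun j _ hj => sphHarm_orth d hd k j (Ne.symm hj) _ _ (hd' k) (hd' j)
  rw [integral_eq_zero_iff_of_nonneg (fun z => mul_self_nonneg _)
    (cont_integrable d _ ((hcont k).mul (hcont k)))] at h1
  filter_upwards [h1] with z hz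
  have : (c k - c' k) z = 0 := mul_self_eq_zero.1 hz
  simpa [sub_eq_zero] using this

lemma innerW_eq (d n : ℕ) (hd : 1 ≤ d) (P : SphFun d) (c : ℕ → SphFun d)
    (hc : ∀ j, c j ∈ sphHarmonic d j) (h : P = ∑ j ∈ Finset.Icc 1 n, c j) :
    innerW d n P P = ∑ k ∈ Finset.Icc 1 n, ((k : ℝ) * ((k : ℝ) + d - 1)) *
      ∫ z, c k z * c k z ∂muSph d := by
  have hex : ∃ c : ℕ → SphFun d, (∀ j, c j ∈ sphHarmonic d j) ∧
    P = ∑ j ∈ Finset.Icc 1 n, c j := ⟨c, hc, h⟩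
  unfold innerW
  refine Finset.sum_congr rfl fun k hk => ?_
  congr 1
  have e : harmComponent d n P k = hex.choose k := by
    unfold harmComponent
    rw [dif_pos hex]
  rw [e]
  have hs := hex.choose_spec
  refine integral_congr_ae ?_
  filter_upwards [comp_ae d n hd c hex.choose hc hs.1 (h.symm.trans hs.2) k hk] with z hz
  rw [hz]

/-- components of the averaged kernel -/
noncomputable def cFun (d N : ℕ) (x : Fin N → Sph d) (k : ℕ) : SphFun d :=
  fun z => ∑ i, ((N : ℝ)⁻¹ * lamG d k) *
    (gegenbauer (((d : ℝ) - 1) / 2) k).eval ⟪(x i : Euc d), (z : Euc d)⟫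

lemma cFun_mem (d N : ℕ) (x : Fin N → Sph d) (k : ℕ) : cFun d N x k ∈ sphHarmonic d k := by
  refine ⟨∑ i, MvPolynomial.C ((N : ℝ)⁻¹ * lamG d k) * hGeg d (((d : ℝ) - 1) / 2) (x i : Euc d) k,
    MvPolynomial.IsHomogeneous.sum _ _ _ fun i _ => (hGeg_hom d _ _ k).C_mul _, ?_, ?_⟩
  · rw [lap_sum]
    refine Finset.sum_eq_zero fun i _ => ?_
    rw [lap_C_mul, hGeg_harm d _ (by simp), mul_zero]
  · intro z
    rw [map_sum, cFun]
    refine Finset.sum_congr rfl fun i _ => ?_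
    rw [map_mul, MvPolynomial.eval_C, ← hGeg_eval d _ (x i : Euc d) z (by simp)]
    rfl

lemma cFun_sum (d n N : ℕ) (x : Fin N → Sph d) :
    (N : ℝ)⁻¹ • ∑ i, GxFun d n (x i : Euc d) = ∑ k ∈ Finset.Icc 1 n, cFun d N x k := by
  ext z
  simp only [Pi.smul_apply, Finset.sum_apply, GxFun, gw, cFun, Polynomial.eval_finsetSum,
    Polynomial.eval_mul, Polynomial.eval_C, smul_eq_mul, Finset.mul_sum]
  rw [Finset.sum_comm]
  refine Finset.sum_congr rfl fun k _ => Finset.sum_congr rfl fun i _ => ?_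
  rw [lamG]; ring

lemma geg_repro (d : ℕ) (hd : 1 ≤ d) (x y : Sph d) (k : ℕ) :
    ((d : ℝ) + 2 * k - 1) * ∫ z : Sph d, (gegenbauer (((d : ℝ) - 1) / 2) k).eval ⟪(x : Euc d), (z : Euc d)⟫ *
      (gegenbauer (((d : ℝ) - 1) / 2) k).eval ⟪(y : Euc d), (z : Euc d)⟫ ∂muSph d =
    ((d : ℝ) - 1) * (gegenbauer (((d : ℝ) - 1) / 2) k).eval ⟪(x : Euc d), (y : Euc d)⟫ := by
  rw [← hGeg_eval d _ (x : Euc d) y (by simp), ← repro_geg d hd y k _ (hGeg_hom d _ _ k)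
    (hGeg_harm d _ (by simp) k), sphI]
  congr 2
  ext z
  rw [← hGeg_eval d _ (x : Euc d) z (by simp), ← hGeg_eval d _ (y : Euc d) z (by simp)]
  simp [evE]

lemma eval_cont (d : ℕ) (p : Polynomial ℝ) (x : Sph d) :
    Continuous (fun z : Sph d => p.eval ⟪(x : Euc d), (z : Euc d)⟫) :=
  p.continuous.comp (by fun_prop)

lemma cFun_sq (d N : ℕ) (hd : 1 ≤ d) (x : Fin N → Sph d) (k : ℕ) (hk : 1 ≤ k) :
    ((k : ℝ) * ((k : ℝ) + d - 1)) * ∫ z, cFun d N x k z * cFun d N x k z ∂muSph d =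
      ((N : ℝ)⁻¹) ^ 2 * ∑ i, ∑ j, lamG d k *
        (gegenbauer (((d : ℝ) - 1) / 2) k).eval ⟪(x i : Euc d), (x j : Euc d)⟫ := by
  obtain ⟨k, rfl⟩ : ∃ m, k = m + 1 := ⟨k - 1, by omega⟩
  have key := lam_key d hd k
  set k' := k + 1
  set g := gegenbauer (((d : ℝ) - 1) / 2) k'
  have e : ∫ z, cFun d N x k' z * cFun d N x k' z ∂muSph d =
      ∑ i, ∑ j, ((N : ℝ)⁻¹ * lamG d k') ^ 2 * ∫ z : Sph d, g.eval ⟪(x i : Euc d), (z : Euc d)⟫ *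
        g.eval ⟪(x j : Euc d), (z : Euc d)⟫ ∂muSph d := by
    simp only [← integral_const_mul]
    simp_rw [cFun, Finset.sum_mul_sum]
    rw [integral_finsetSum]
    · refine Finset.sum_congr rfl fun i _ => ?_
      rw [integral_finsetSum]
      · refine Finset.sum_congr rfl fun j _ => ?_
        congr 1; ext z; ring
      · exact fun j _ => cont_integrable d _ ((continuous_const.mul (eval_cont d g (x i))).mul
          (continuous_const.mul (eval_cont d g (x j))))
    · exact fun i _ => cont_integrable d _ (continuous_finsetSum _ fun j _ =>
        (continuous_const.mul (eval_cont d g (x i))).mul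
          (continuous_const.mul (eval_cont d g (x j))))
  rw [e, Finset.mul_sum, Finset.mul_sum]
  refine Finset.sum_congr rfl fun i _ => ?_
  rw [Finset.mul_sum, Finset.mul_sum]
  refine Finset.sum_congr rfl fun j _ => ?_
  have hr := geg_repro d hd (x i) (x j) k'
  have hd' : (1 : ℝ) ≤ d := by exact_mod_cast hd
  have hne : (d : ℝ) + 2 * (k' : ℕ) - 1 ≠ 0 := by
    have : (1 : ℝ) ≤ (k' : ℕ) := by exact_mod_cast hk
    linarith
  apply mul_left_cancel₀ hne
  linear_combination ((k' : ℝ) * ((k' : ℝ) + d - 1)) * ((N : ℝ)⁻¹ * lamG d k') ^ 2 * hr +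
    (N : ℝ)⁻¹ ^ 2 * g.eval ⟪(x i : Euc d), (x j : Euc d)⟫ * key

lemma normW_sq (d n N : ℕ) (hd : 1 ≤ d) (x : Fin N → Sph d) :
    normW d n ((N : ℝ)⁻¹ • ∑ i, GxFun d n (x i : Euc d)) ^ 2 =
      ((N : ℝ)⁻¹) ^ 2 * ∑ i, ∑ j, (gw d n).eval ⟪(x i : Euc d), (x j : Euc d)⟫ := by
  have h := innerW_eq d n hd _ (cFun d N x) (cFun_mem d N x) (cFun_sum d n N x)
  rw [normW, Real.sq_sqrt, h]
  · rw [Finset.sum_congr rfl fun k hk => cFun_sq d N hd x k (Finset.mem_Icc.1 hk).1,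
      ← Finset.mul_sum]
    congr 1
    simp only [gw, Polynomial.eval_finsetSum, Polynomial.eval_mul, Polynomial.eval_C]
    rw [Finset.sum_comm]
    refine Finset.sum_congr rfl fun i _ => ?_
    rw [Finset.sum_comm]
    rfl
  · rw [h]
    have hd' : (1 : ℝ) ≤ d := by exact_mod_cast hd
    refine Finset.sum_nonneg fun k _ => mul_nonneg (mul_nonneg (Nat.cast_nonneg _) ?_)
      (integral_nonneg fun z => mul_self_nonneg _)
    have : (0 : ℝ) ≤ k := Nat.cast_nonneg _
    linarith

lemma gw_mean (d n : ℕ) (hd : 1 ≤ d) (x : Sph d) :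
    ∫ y : Sph d, (gw d n).eval ⟪(x : Euc d), (y : Euc d)⟫ ∂muSph d = 0 := by
  simp only [gw, Polynomial.eval_finsetSum, Polynomial.eval_mul, Polynomial.eval_C]
  rw [integral_finsetSum]
  · refine Finset.sum_eq_zero fun k hk => ?_
    obtain ⟨k, rfl⟩ : ∃ m, k = m + 1 := ⟨k - 1, by have := Finset.mem_Icc.1 hk; omega⟩
    rw [integral_const_mul]
    have := harm_mean d hd k _ (hGeg_hom d (((d : ℝ) - 1) / 2) (x : Euc d) (k + 1))
      (hGeg_harm d _ (by simp) _)
    rw [sphI] at this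
    simp only [hGeg_eval d (((d : ℝ) - 1) / 2) (x : Euc d) (_ : Sph d) (norm_eq_of_mem_sphere _) (k + 1)] at this
    rw [this, mul_zero]
  · exact fun k _ => cont_integrable d _ (continuous_const.mul (eval_cont d _ x))

/-- The uniform probability measure on the `i`-th region. -/
noncomputable def nuR (d N : ℕ) (R : Fin N → Set (Sph d)) (i : Fin N) : Measure (Sph d) :=
  (N : ENNReal) • (muSph d).restrict (R i)

lemma nuR_prob (d N : ℕ) (hN : 1 ≤ N) (R : Fin N → Set (Sph d))
    (hR : IsAreaRegularPartition d N R) (i : Fin N) : IsProbabilityMeasure (nuR d N R i) := by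
  constructor
  rw [nuR, Measure.smul_apply, Measure.restrict_apply_univ, hR.2.2.2 i, smul_eq_mul, one_div]
  exact ENNReal.mul_inv_cancel (by simp; omega) (by simp)

lemma pi_nuR (d N : ℕ) (hN : 1 ≤ N) (R : Fin N → Set (Sph d))
    (hR : IsAreaRegularPartition d N R) :
    Measure.pi (nuR d N R) = ((N : ENNReal) ^ N) •
      (Measure.pi fun _ : Fin N => muSph d).restrict (Set.univ.pi R) := by
  have := nuR_prob d N hN R hR
  refine Measure.pi_eq fun s hs => ?_
  rw [Measure.smul_apply, Measure.restrict_apply (MeasurableSet.univ_pi hs),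
    ← Set.pi_inter_distrib, Measure.pi_pi]
  simp only [nuR, Measure.smul_apply, smul_eq_mul, Measure.restrict_apply (hs _)]
  rw [Finset.prod_mul_distrib]
  simp

lemma sum_restrict (d N : ℕ) (hN : 1 ≤ N) (R : Fin N → Set (Sph d))
    (hR : IsAreaRegularPartition d N R) : muSph d = ∑ i, (muSph d).restrict (R i) := by
  refine Measure.eq_of_le_of_measure_univ_eq ?_ ?_
  · have h := Measure.restrict_iUnion_le (μ := muSph d) (s := R)
    rwa [hR.2.1, Measure.restrict_univ, Measure.sum_fintype] at h
  · simp only [Measure.coe_finsetSum, Finset.sum_apply, Measure.restrict_apply_univ, hR.2.2.2]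
    simp only [measure_univ, Finset.sum_const, Finset.card_univ, Fintype.card_fin, one_div, nsmul_eq_mul]
    exact (ENNReal.mul_inv_cancel (by simp; omega) (by simp)).symm

/-- The kernel. -/
noncomputable def kerG (d n : ℕ) (p : Sph d × Sph d) : ℝ :=
  (gw d n).eval ⟪(p.1 : Euc d), (p.2 : Euc d)⟫

lemma kerG_cont (d n : ℕ) : Continuous (kerG d n) :=
  (gw d n).continuous.comp (by fun_prop)

lemma cont_int {X : Type*} [TopologicalSpace X] [CompactSpace X] [MeasurableSpace X]
    [OpensMeasurableSpace X] (μ : Measure X) [IsFiniteMeasure μ] (f : X → ℝ) (hf : Continuous f) :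
    Integrable f μ :=
  hf.integrable_of_hasCompactSupport (HasCompactSupport.of_compactSpace _)

lemma pair_int (d n N : ℕ) (hN : 1 ≤ N) (R : Fin N → Set (Sph d))
    (hR : IsAreaRegularPartition d N R) (i j : Fin N) (hij : i ≠ j) :
    ∫ x, kerG d n (x i, x j) ∂Measure.pi (nuR d N R) =
      (N : ℝ) ^ 2 * ∫ x in R i, ∫ y in R j, kerG d n (x, y) ∂muSph d ∂muSph d := by
  have := nuR_prob d N hN R hR
  have hind := (ProbabilityTheory.iIndepFun_pi (μ := nuR d N R) (X := fun _ => id)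
    (fun _ => aemeasurable_id)).indepFun hij
  have hmi : ∀ i : Fin N, Measurable (fun x : Fin N → Sph d => x i) := fun i => measurable_pi_apply i
  simp only [id] at hind
  rw [ProbabilityTheory.indepFun_iff_map_prod_eq_prod_map_map (hmi i).aemeasurable
    (hmi j).aemeasurable] at hind
  have e1 : ∀ i, (Measure.pi (nuR d N R)).map (fun x : Fin N → Sph d => x i) = nuR d N R i :=
    fun i => (measurePreserving_eval (nuR d N R) i).map_eq
  rw [e1, e1] at hind
  have e2 := integral_map (μ := Measure.pi (nuR d N R)) (φ := fun x : Fin N → Sph d => (x i, x j))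
    ((hmi i).prodMk (hmi j)).aemeasurable (f := kerG d n)
    (kerG_cont d n).aestronglyMeasurable
  rw [← e2, hind, integral_prod _ (cont_int _ _ (kerG_cont d n))]
  simp only [nuR, integral_smul_measure, ENNReal.toReal_natCast, smul_eq_mul, integral_const_mul]
  ring

theorem main_aux (d n N : ℕ) (hd : 1 ≤ d) (hN : 1 ≤ N)
    (R : Fin N → Set (Sph d)) (hR : IsAreaRegularPartition d N R) :
    (∏ i, ((muSph d) (R i)).toReal)⁻¹ *
        ∫ x in Set.univ.pi R,
          (normW d n ((N : ℝ)⁻¹ • ∑ i, GxFun d n (x i : Euc d))) ^ 2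
          ∂(Measure.pi fun _ : Fin N => muSph d) =
      ∑ i, ∫ x in R i, ∫ y in R i,
        ((gw d n).eval 1 - (gw d n).eval ⟪(x : Euc d), (y : Euc d)⟫) ∂muSph d ∂muSph d := by
  have hp := nuR_prob d N hN R hR
  have hN0 : (N : ℝ) ≠ 0 := by positivity
  set A : Fin N → Fin N → ℝ := fun i j =>
    ∫ x in R i, ∫ y in R j, kerG d n (x, y) ∂muSph d ∂muSph d with hA
  have hmu : ∀ i, ((muSph d) (R i)).toReal = (N : ℝ)⁻¹ := by
    intro i; rw [hR.2.2.2 i]; simp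
  have hl : (∏ i, ((muSph d) (R i)).toReal)⁻¹ = ((N : ENNReal) ^ N).toReal := by
    simp [hmu]
  rw [hl, ← smul_eq_mul, ← integral_smul_measure, ← pi_nuR d N hN R hR]
  simp_rw [normW_sq d n N hd]
  rw [integral_const_mul]
  have hcont : ∀ i j, Continuous (fun x : Fin N → Sph d => kerG d n (x i, x j)) := fun i j =>
    (kerG_cont d n).comp (by fun_prop)
  have h1 : ∫ x : Fin N → Sph d, ∑ i, ∑ j, (gw d n).eval ⟪(x i : Euc d), (x j : Euc d)⟫
      ∂Measure.pi (nuR d N R) = ∑ i, ∑ j, ∫ x, kerG d n (x i, x j) ∂Measure.pi (nuR d N R) := by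
    rw [integral_finsetSum]
    · refine Finset.sum_congr rfl fun i _ => ?_
      rw [integral_finsetSum]
      · rfl
      · exact fun j _ => cont_int _ _ (hcont i j)
    · exact fun i _ => cont_int _ _ (continuous_finsetSum _ fun j _ => hcont i j)
  have hone : ∀ x : Sph d, kerG d n (x, x) = (gw d n).eval 1 := by
    intro x
    simp [kerG]
  have h2 : ∀ i j, ∫ x, kerG d n (x i, x j) ∂Measure.pi (nuR d N R) =
      (N : ℝ) ^ 2 * A i j + if i = j then (gw d n).eval 1 - (N : ℝ) ^ 2 * A i i else 0 := by
    intro i j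
    by_cases hij : i = j
    · subst hij
      simp [hone]
    · rw [if_neg hij, add_zero, pair_int d n N hN R hR i j hij]
  have hinner : ∀ j, Continuous (fun x => ∫ y in R j, kerG d n (x, y) ∂muSph d) := by
    intro j
    exact continuous_parametric_integral_of_continuous (f := fun x y : Sph d => kerG d n (x, y))
      (kerG_cont d n) (hR.1 j).isCompact
  have h3 : ∀ i, ∑ j, A i j = 0 := by
    intro i
    rw [hA]
    simp only
    rw [← integral_finsetSum]
    · have : ∀ x : Sph d, ∑ j, ∫ y in R j, kerG d n (x, y) ∂muSph d = 0 := by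
        intro x
        rw [← integral_finsetSum_measure, ← sum_restrict d N hN R hR]
        · exact gw_mean d n hd x
        · exact fun j _ => cont_int _ _ ((kerG_cont d n).comp (by fun_prop))
      simp [this]
    · exact fun j _ => cont_int _ _ (hinner j)
  have h4 : ∀ i, ∫ x in R i, ∫ y in R i,
      ((gw d n).eval 1 - (gw d n).eval ⟪(x : Euc d), (y : Euc d)⟫) ∂muSph d ∂muSph d =
      (N : ℝ)⁻¹ ^ 2 * (gw d n).eval 1 - A i i := by
    intro i
    have : ∀ x : Sph d, ∫ y in R i,
      ((gw d n).eval 1 - (gw d n).eval ⟪(x : Euc d), (y : Euc d)⟫) ∂muSph d =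
      (N : ℝ)⁻¹ * (gw d n).eval 1 - ∫ y in R i, kerG d n (x, y) ∂muSph d := by
      intro x
      rw [integral_sub (integrable_const _) (cont_int _ _ (eval_cont d _ x))]
      simp [measureReal_def, hmu, kerG]
    simp_rw [this]
    rw [integral_sub (integrable_const _) (cont_int _ _ (hinner i))]
    simp [measureReal_def, hmu, hA]
    ring
  rw [h1]
  simp_rw [h2, h4, Finset.sum_add_distrib, ← Finset.mul_sum, h3]
  simp only [Finset.sum_ite_eq, Finset.mem_univ, if_true, mul_zero, Finset.sum_const_zero, zero_add,
    Finset.mul_sum]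
  refine Finset.sum_congr rfl fun i _ => ?_
  field_simp

/-- For an area-regular partition `R_1,…,R_N` of `S^d`, the average of
`‖(1/N) Σ_i G_{x_i}‖_w²` over points `x_i` independent and uniform in the `R_i` equals
`Σ_i ∫_{R_i×R_i} (g_w(1) − g_w((x,y))) dμ_d(x) dμ_d(y)`. -/
theorem statement18 (d n N : ℕ) (hd : 1 ≤ d) (hn : 1 ≤ n) (hN : 1 ≤ N)
    (R : Fin N → Set (Sph d)) (hR : IsAreaRegularPartition d N R) :
    (∏ i, ((muSph d) (R i)).toReal)⁻¹ *
        ∫ x in Set.univ.pi R,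
          (normW d n ((N : ℝ)⁻¹ • ∑ i, GxFun d n (x i : Euc d))) ^ 2
          ∂(Measure.pi fun _ : Fin N => muSph d) =
      ∑ i, ∫ x in R i, ∫ y in R i,
        ((gw d n).eval 1 - (gw d n).eval ⟪(x : Euc d), (y : Euc d)⟫) ∂muSph d ∂muSph d := by
  exact main_aux d n N hd hN R hR
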